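/- Let (C, δ) and (D, ∂) be S¹-complexes over a commutative ring K and let κ = (κ₀, κ₁, …) be an S¹-equivariant chain map between them such that κ₀ : (C, δ₀) → (D, ∂₀) is a quasi-isomorphism. Then for all integers m ≥ n, the induced chain map of truncated complexes κ⟨m,n⟩ : C⟨m,n⟩ → D⟨m,n⟩, given componentwise by (κ⟨m,n⟩ x)_q = ∑_{i ≥ 0, q−i ≥ n} κᵢ(x_{q−i}), is a quasi-isomorphism, i.e. induces an isomorphism H_*(C⟨m,n⟩) ≅ H_*(D⟨m,n⟩). -/

import Mathlib

open Finset DirectSum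

set_option maxHeartbeats 1000000
set_option synthInstance.maxHeartbeats 1000000

noncomputable section Lib

variable (K : Type) [CommRing K]

/-- Transport of graded components along an equality of degrees. -/
def pcast (F : ℤ → Type) [∀ n, AddCommGroup (F n)] [∀ n, Module K (F n)]
    {a b : ℤ} (h : a = b) : F a →ₗ[K] F b := by subst h; exact LinearMap.id

/-- Transport of graded components along an equality of degrees when it holds
(and the zero map otherwise). -/
def tr (F : ℤ → Type) [∀ n, AddCommGroup (F n)] [∀ n, Module K (F n)]
    (a b : ℤ) : F a →ₗ[K] F b := if h : a = b then pcast K F h else 0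

variable (C : ℤ → Type) [∀ n, AddCommGroup (C n)] [∀ n, Module K (C n)]
variable (D : ℤ → Type) [∀ n, AddCommGroup (D n)] [∀ n, Module K (D n)]
variable (E : ℤ → Type) [∀ n, AddCommGroup (E n)] [∀ n, Module K (E n)]

/-- An S¹-structure on a ℤ-graded `K`-module `C`: a sequence of operations
`δ i : Cⁿ → C^{n+1-2i}` with `∑_{i+j=k} δ i ∘ δ j = 0` for all `k ≥ 0`. -/
structure S1Struct where
  δ : (i : ℕ) → (n : ℤ) → C n →ₗ[K] C (n + 1 - 2 * (i : ℤ))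
  rel : ∀ (k : ℕ) (n : ℤ) (x : C n),
    ∑ p ∈ antidiagonal k,
      tr K C (n + 1 - 2 * (p.2 : ℤ) + 1 - 2 * (p.1 : ℤ)) (n + 2 - 2 * (k : ℤ))
        (δ p.1 (n + 1 - 2 * (p.2 : ℤ)) (δ p.2 n x)) = 0

/-- An S¹-equivariant chain map between S¹-complexes: a sequence of operations
`κ i : Cⁿ → D^{n-2i}` with `∑_{i+j=k} (κ i ∘ δ j - ∂ j ∘ κ i) = 0` for all `k ≥ 0`. -/
structure S1Map (S : S1Struct K C) (T : S1Struct K D) where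
  κ : (i : ℕ) → (n : ℤ) → C n →ₗ[K] D (n - 2 * (i : ℤ))
  rel : ∀ (k : ℕ) (n : ℤ) (x : C n),
    ∑ p ∈ antidiagonal k,
      (tr K D (n + 1 - 2 * (p.2 : ℤ) - 2 * (p.1 : ℤ)) (n + 1 - 2 * (k : ℤ))
          (κ p.1 (n + 1 - 2 * (p.2 : ℤ)) (S.δ p.2 n x))
        - tr K D (n - 2 * (p.1 : ℤ) + 1 - 2 * (p.2 : ℤ)) (n + 1 - 2 * (k : ℤ))
          (T.δ p.2 (n - 2 * (p.1 : ℤ)) (κ p.1 n x))) = 0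

/-- An S¹-equivariant chain homotopy between two S¹-equivariant chain maps: a sequence
of operations `h i : Cⁿ → D^{n-2i-1}` with
`κ k - κ' k = ∑_{i+j=k} (h i ∘ δ j + ∂ j ∘ h i)` for all `k ≥ 0`. -/
structure S1Homotopy {S : S1Struct K C} {T : S1Struct K D} (κ κ' : S1Map K C D S T) where
  h : (i : ℕ) → (n : ℤ) → C n →ₗ[K] D (n - 2 * (i : ℤ) - 1)
  rel : ∀ (k : ℕ) (n : ℤ) (x : C n),
    κ.κ k n x - κ'.κ k n x =
      ∑ p ∈ antidiagonal k,
        (tr K D (n + 1 - 2 * (p.2 : ℤ) - 2 * (p.1 : ℤ) - 1) (n - 2 * (k : ℤ))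
            (h p.1 (n + 1 - 2 * (p.2 : ℤ)) (S.δ p.2 n x))
          + tr K D (n - 2 * (p.1 : ℤ) - 1 + 1 - 2 * (p.2 : ℤ)) (n - 2 * (k : ℤ))
            (T.δ p.2 (n - 2 * (p.1 : ℤ) - 1) (h p.1 n x)))

/-- The degree `n` part of the negative cyclic complex `C⁻ = C[[u]]`:
formal power series `∑_{i ≥ 0} aᵢ uⁱ` with `aᵢ ∈ C^{n-2i}`. -/
abbrev NegCyc (n : ℤ) : Type := (i : ℕ) → C (n - 2 * (i : ℤ))

/-- The componentwise extension `(∑ uⁱ F i) (∑ aⱼ uʲ) = ∑_k (∑_{i+j=k} F i (aⱼ)) u^k`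
of a sequence of operations `F i` of degree `e - 2i` to the power series complexes. -/
def nExt (e : ℤ) (F : (i : ℕ) → (m : ℤ) → C m →ₗ[K] D (m + e - 2 * (i : ℤ))) (n t : ℤ) :
    NegCyc C n →ₗ[K] NegCyc D t where
  toFun x k := ∑ p ∈ antidiagonal k,
    tr K D (n - 2 * (p.2 : ℤ) + e - 2 * (p.1 : ℤ)) (t - 2 * (k : ℤ))
      (F p.1 (n - 2 * (p.2 : ℤ)) (x p.2))
  map_add' x y := by
    funext k
    simp [Finset.sum_add_distrib]
  map_smul' c x := by
    funext k
    simp [Finset.smul_sum]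

/-- The equivariant differential `δ^{S¹} = δ₀ + uδ₁ + u²δ₂ + ⋯` on `C⁻`. -/
def deltaNeg (S : S1Struct K C) (n : ℤ) : NegCyc C n →ₗ[K] NegCyc C (n + 1) :=
  nExt K C C 1 S.δ n (n + 1)

/-- The map `κ^{S¹} = κ₀ + uκ₁ + u²κ₂ + ⋯ : C⁻ → D⁻`. -/
def kappaNeg {S : S1Struct K C} {T : S1Struct K D} (κ : S1Map K C D S T) (n : ℤ) :
    NegCyc C n →ₗ[K] NegCyc D n :=
  nExt K C D 0 (fun i m => tr K D (m - 2 * (i : ℤ)) (m + 0 - 2 * (i : ℤ)) ∘ₗ κ.κ i m) n n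

/-- The map `H = h₀ + uh₁ + u²h₂ + ⋯ : C⁻ → D⁻[-1]`. -/
def homotopyNeg {S : S1Struct K C} {T : S1Struct K D} {κ κ' : S1Map K C D S T}
    (ht : S1Homotopy K C D κ κ') (n : ℤ) : NegCyc C n →ₗ[K] NegCyc D (n - 1) :=
  nExt K C D (-1) (fun i m => tr K D (m - 2 * (i : ℤ) - 1) (m + (-1) - 2 * (i : ℤ)) ∘ₗ ht.h i m)
    n (n - 1)

/-- The degree `n` part of the periodic complex `C^∧ = C((u))`, as a submodule of all
families `(aᵢ)_{i ∈ ℤ}` with `aᵢ ∈ C^{n-2i}`: those with `aᵢ = 0` for all sufficiently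
negative `i` (formal Laurent series). -/
def PerSub (n : ℤ) : Submodule K ((i : ℤ) → C (n - 2 * i)) where
  carrier := {x | ∃ N : ℤ, ∀ i < N, x i = 0}
  add_mem' := by
    rintro a b ⟨Na, ha⟩ ⟨Nb, hb⟩
    refine ⟨min Na Nb, fun i hi => ?_⟩
    have h1 := ha i (lt_of_lt_of_le hi (min_le_left _ _))
    have h2 := hb i (lt_of_lt_of_le hi (min_le_right _ _))
    show a i + b i = 0
    rw [h1, h2, add_zero]
  zero_mem' := ⟨0, fun _ _ => rfl⟩
  smul_mem' := by
    rintro c a ⟨N, hN⟩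
    refine ⟨N, fun i hi => ?_⟩
    show c • a i = 0
    rw [hN i hi, smul_zero]

/-- The degree `n` part of the periodic complex `C^∧ = C((u))`. -/
abbrev PerCyc (n : ℤ) : Type := ↥(PerSub K C n)

lemma natle_finite (m : ℤ) : Set.Finite {i : ℕ | (i : ℤ) ≤ m} := by
  apply Set.Finite.subset (Set.finite_Iic m.toNat)
  intro i hi
  simp only [Set.mem_setOf_eq] at hi
  simp only [Set.mem_Iic]
  omega

lemma uExt_sf (e : ℤ) (F : (i : ℕ) → (m : ℤ) → C m →ₗ[K] D (m + e - 2 * (i : ℤ))) (n t : ℤ)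
    (x : PerCyc K C n) (k : ℤ) :
    (Function.support fun i : ℕ =>
      tr K D (n - 2 * (k - (i : ℤ)) + e - 2 * (i : ℤ)) (t - 2 * k)
        (F i (n - 2 * (k - (i : ℤ))) (x.1 (k - (i : ℤ))))).Finite := by
  obtain ⟨N, hN⟩ := x.2
  apply Set.Finite.subset (natle_finite (k - N))
  intro i hi
  simp only [Function.mem_support] at hi
  simp only [Set.mem_setOf_eq]
  by_contra hcon
  push_neg at hcon
  rw [hN (k - (i : ℤ)) (by omega)] at hi
  simp at hi

/-- Componentwise extension of a sequence of operations `F i` of degree `e - 2i` to the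
Laurent series complexes: `(∑ aᵢ uⁱ) ↦ ∑_k (∑_{i≥0} F i (a_{k-i})) u^k`
(valued in the ambient product). -/
def uExtAux (e : ℤ) (F : (i : ℕ) → (m : ℤ) → C m →ₗ[K] D (m + e - 2 * (i : ℤ))) (n t : ℤ) :
    PerCyc K C n →ₗ[K] ((k : ℤ) → D (t - 2 * k)) where
  toFun x k := ∑ᶠ i : ℕ,
    tr K D (n - 2 * (k - (i : ℤ)) + e - 2 * (i : ℤ)) (t - 2 * k)
      (F i (n - 2 * (k - (i : ℤ))) (x.1 (k - (i : ℤ))))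
  map_add' x y := by
    funext k
    simp only [Pi.add_apply]
    rw [← finsum_add_distrib (uExt_sf K C D e F n t x k) (uExt_sf K C D e F n t y k)]
    apply finsum_congr
    intro i
    have hxy : (↑(x + y) : (i : ℤ) → C (n - 2 * i)) (k - (i : ℤ))
        = x.1 (k - (i : ℤ)) + y.1 (k - (i : ℤ)) := rfl
    rw [hxy, map_add, map_add]
  map_smul' c x := by
    funext k
    simp only [Pi.smul_apply, RingHom.id_apply]
    rw [smul_finsum' c (uExt_sf K C D e F n t x k)]
    apply finsum_congr
    intro i
    have hcx : (↑(c • x) : (i : ℤ) → C (n - 2 * i)) (k - (i : ℤ))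
        = c • x.1 (k - (i : ℤ)) := rfl
    rw [hcx, map_smul, map_smul]

@[simp] lemma uExtAux_apply (e : ℤ) (F : (i : ℕ) → (m : ℤ) → C m →ₗ[K] D (m + e - 2 * (i : ℤ)))
    (n t : ℤ) (x : PerCyc K C n) (k : ℤ) :
    uExtAux K C D e F n t x k = ∑ᶠ i : ℕ,
      tr K D (n - 2 * (k - (i : ℤ)) + e - 2 * (i : ℤ)) (t - 2 * k)
        (F i (n - 2 * (k - (i : ℤ))) (x.1 (k - (i : ℤ)))) := rfl

lemma uExtAux_mem (e : ℤ) (F : (i : ℕ) → (m : ℤ) → C m →ₗ[K] D (m + e - 2 * (i : ℤ)))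
    (n t : ℤ) (x : PerCyc K C n) : uExtAux K C D e F n t x ∈ PerSub K D t := by
  obtain ⟨N, hN⟩ := x.2
  refine ⟨N, fun k hk => ?_⟩
  rw [uExtAux_apply]
  apply finsum_eq_zero_of_forall_eq_zero
  intro i
  rw [hN (k - (i : ℤ)) (by omega)]
  simp

/-- Componentwise extension of a sequence of operations `F i` of degree `e - 2i` to the
complexes of formal Laurent series. -/
def uExt (e : ℤ) (F : (i : ℕ) → (m : ℤ) → C m →ₗ[K] D (m + e - 2 * (i : ℤ))) (n t : ℤ) :
    PerCyc K C n →ₗ[K] PerCyc K D t :=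
  LinearMap.codRestrict (PerSub K D t) (uExtAux K C D e F n t) (uExtAux_mem K C D e F n t)

@[simp] lemma uExt_coe_apply (e : ℤ) (F : (i : ℕ) → (m : ℤ) → C m →ₗ[K] D (m + e - 2 * (i : ℤ)))
    (n t : ℤ) (x : PerCyc K C n) (k : ℤ) :
    (uExt K C D e F n t x).1 k = ∑ᶠ i : ℕ,
      tr K D (n - 2 * (k - (i : ℤ)) + e - 2 * (i : ℤ)) (t - 2 * k)
        (F i (n - 2 * (k - (i : ℤ))) (x.1 (k - (i : ℤ)))) := rfl

/-- The equivariant differential `δ^{S¹} = δ₀ + uδ₁ + u²δ₂ + ⋯` on `C^∧ = C((u))`. -/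
def deltaPer (S : S1Struct K C) (n : ℤ) : PerCyc K C n →ₗ[K] PerCyc K C (n + 1) :=
  uExt K C C 1 S.δ n (n + 1)

/-- The map `κ^{S¹} = κ₀ + uκ₁ + u²κ₂ + ⋯ : C^∧ → D^∧`. -/
def kappaPer {S : S1Struct K C} {T : S1Struct K D} (κ : S1Map K C D S T) (n : ℤ) :
    PerCyc K C n →ₗ[K] PerCyc K D n :=
  uExt K C D 0 (fun i m => tr K D (m - 2 * (i : ℤ)) (m + 0 - 2 * (i : ℤ)) ∘ₗ κ.κ i m) n n

/-- The map `H = h₀ + uh₁ + u²h₂ + ⋯ : C^∧ → D^∧[-1]`. -/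
def homotopyPer {S : S1Struct K C} {T : S1Struct K D} {κ κ' : S1Map K C D S T}
    (ht : S1Homotopy K C D κ κ') (n : ℤ) : PerCyc K C n →ₗ[K] PerCyc K D (n - 1) :=
  uExt K C D (-1) (fun i m => tr K D (m - 2 * (i : ℤ) - 1) (m + (-1) - 2 * (i : ℤ)) ∘ₗ ht.h i m)
    n (n - 1)

/-- The submodule `u^m C⁻ ⊆ C^∧` of Laurent series supported in powers `≥ m`. -/
def uPow (m : ℤ) (n : ℤ) : Submodule K (PerCyc K C n) where
  carrier := {x | ∀ i < m, x.1 i = 0}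
  add_mem' := by
    intro a b ha hb i hi
    show a.1 i + b.1 i = 0
    rw [ha i hi, hb i hi, add_zero]
  zero_mem' := fun _ _ => rfl
  smul_mem' := by
    intro c a ha i hi
    show c • a.1 i = 0
    rw [ha i hi, smul_zero]

lemma uExt_mem_uPow (e : ℤ) (F : (i : ℕ) → (m : ℤ) → C m →ₗ[K] D (m + e - 2 * (i : ℤ)))
    (n t : ℤ) (m : ℤ) (x : PerCyc K C n) (hx : x ∈ uPow K C m n) :
    uExt K C D e F n t x ∈ uPow K D m t := by
  intro k hk
  rw [uExt_coe_apply]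
  apply finsum_eq_zero_of_forall_eq_zero
  intro i
  rw [hx (k - (i : ℤ)) (by omega)]
  simp

/-- The restriction of `δ^{S¹}` to the subcomplex `u^m C⁻ ⊆ C^∧`. -/
def deltaRes (S : S1Struct K C) (m n : ℤ) : ↥(uPow K C m n) →ₗ[K] ↥(uPow K C m (n + 1)) :=
  (deltaPer K C S n).restrict (fun x hx => uExt_mem_uPow K C C 1 S.δ n (n + 1) m x hx)

/-- The restriction of `κ^{S¹}` to the subcomplexes `u^m C⁻ → u^m D⁻`. -/
def kappaRes {S : S1Struct K C} {T : S1Struct K D} (κ : S1Map K C D S T) (m n : ℤ) :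
    ↥(uPow K C m n) →ₗ[K] ↥(uPow K D m n) :=
  (kappaPer K C D κ n).restrict
    (fun x hx => uExt_mem_uPow K C D 0
      (fun i m => tr K D (m - 2 * (i : ℤ)) (m + 0 - 2 * (i : ℤ)) ∘ₗ κ.κ i m) n n m x hx)

/-- The degree `n` part of the quotient complex `C⁺ = C^∧ / uC⁻`. -/
abbrev QtC (n : ℤ) : Type := PerCyc K C n ⧸ uPow K C 1 n

/-- The operator on `C⁺ = C^∧/uC⁻` induced by `δ^{S¹}`. -/
def deltaPlus (S : S1Struct K C) (n : ℤ) : QtC K C n →ₗ[K] QtC K C (n + 1) :=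
  Submodule.mapQ _ _ (deltaPer K C S n)
    (fun x hx => uExt_mem_uPow K C C 1 S.δ n (n + 1) 1 x hx)

/-- The map `C⁺ → D⁺` induced by `κ^{S¹}`. -/
def kappaPlus {S : S1Struct K C} {T : S1Struct K D} (κ : S1Map K C D S T) (n : ℤ) :
    QtC K C n →ₗ[K] QtC K D n :=
  Submodule.mapQ _ _ (kappaPer K C D κ n)
    (fun x hx => uExt_mem_uPow K C D 0
      (fun i m => tr K D (m - 2 * (i : ℤ)) (m + 0 - 2 * (i : ℤ)) ∘ₗ κ.κ i m) n n 1 x hx)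

/-- The map `C⁺ → D⁺[-1]` induced by an S¹-equivariant chain homotopy. -/
def homotopyPlus {S : S1Struct K C} {T : S1Struct K D} {κ κ' : S1Map K C D S T}
    (ht : S1Homotopy K C D κ κ') (n : ℤ) : QtC K C n →ₗ[K] QtC K D (n - 1) :=
  Submodule.mapQ _ _ (homotopyPer K C D ht n)
    (fun x hx => uExt_mem_uPow K C D (-1)
      (fun i m => tr K D (m - 2 * (i : ℤ) - 1) (m + (-1) - 2 * (i : ℤ)) ∘ₗ ht.h i m)
      n (n - 1) 1 x hx)

/-- The homology in degree `n` of a cochain complex of `K`-modules given degreewise by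
`d n : F n → F (n+1)`: the kernel of `d n` modulo the image of `d (n-1)`. -/
abbrev HomologyOf (F : ℤ → Type) [∀ n, AddCommGroup (F n)] [∀ n, Module K (F n)]
    (d : (n : ℤ) → F n →ₗ[K] F (n + 1)) (n : ℤ) : Type :=
  ↥(LinearMap.ker (d n)) ⧸
    Submodule.comap (LinearMap.ker (d n)).subtype
      (LinearMap.range (pcast K F (show n - 1 + 1 = n by ring) ∘ₗ d (n - 1)))

/-- A chain map `f` between cochain complexes `(F, dF)` and `(G, dG)` induces an isomorphism
on homology in every degree: for every `n` there is a bijective linear map between the homology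
groups sending the class of a cycle `x` to the class of the cycle `f n x`. -/
def InducesIso (F : ℤ → Type) [∀ n, AddCommGroup (F n)] [∀ n, Module K (F n)]
    (G : ℤ → Type) [∀ n, AddCommGroup (G n)] [∀ n, Module K (G n)]
    (dF : (n : ℤ) → F n →ₗ[K] F (n + 1)) (dG : (n : ℤ) → G n →ₗ[K] G (n + 1))
    (f : (n : ℤ) → F n →ₗ[K] G n) : Prop :=
  ∀ n : ℤ, ∃ φ : HomologyOf K F dF n →ₗ[K] HomologyOf K G dG n,
    Function.Bijective φ ∧
    ∀ (x : F n) (hx : x ∈ LinearMap.ker (dF n)) (hy : f n x ∈ LinearMap.ker (dG n)),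
      φ (Submodule.Quotient.mk ⟨x, hx⟩) = Submodule.Quotient.mk ⟨f n x, hy⟩

/-- The differential `δ₀` of an S¹-complex, as a degree `+1` operator. -/
def d0 (S : S1Struct K C) (n : ℤ) : C n →ₗ[K] C (n + 1) :=
  tr K C (n + 1 - 2 * ((0 : ℕ) : ℤ)) (n + 1) ∘ₗ S.δ 0 n

/-- The leading term `κ₀` of an S¹-equivariant chain map, as a degree `0` operator. -/
def k0 {S : S1Struct K C} {T : S1Struct K D} (κ : S1Map K C D S T) (n : ℤ) :
    C n →ₗ[K] D n :=
  tr K D (n - 2 * ((0 : ℕ) : ℤ)) n ∘ₗ κ.κ 0 n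

/-- The degree `d` part of the truncated complex `C⟨m,n⟩ = uⁿC⁻/u^mC⁻`: families
`(a_p)_{n ≤ p ≤ m-1}` with `a_p ∈ C^{d-2p}`, realized as families over `ℤ`
vanishing outside `[n, m-1]`. -/
def truncSub (m n d : ℤ) : Submodule K ((p : ℤ) → C (d - 2 * p)) where
  carrier := {a | ∀ p : ℤ, (p < n ∨ m ≤ p) → a p = 0}
  add_mem' := by
    intro a b ha hb p hp
    show a p + b p = 0
    rw [ha p hp, hb p hp, add_zero]
  zero_mem' := fun _ _ => rfl
  smul_mem' := by
    intro c a ha p hp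
    show c • a p = 0
    rw [ha p hp, smul_zero]

/-- The differential of the truncated complex `C⟨m,n⟩`, with components
`(δ^{S¹}x)_q = ∑_{i ≥ 0, q-i ≥ n} δᵢ(x_{q-i})` for `n ≤ q ≤ m-1`
(valued in the ambient product). -/
def truncDAux (S : S1Struct K C) (m n d : ℤ) :
    ↥(truncSub K C m n d) →ₗ[K] ((q : ℤ) → C (d + 1 - 2 * q)) where
  toFun x q :=
    if n ≤ q ∧ q < m then
      ∑ i ∈ Finset.range ((q - n).toNat + 1),
        tr K C (d - 2 * (q - (i : ℤ)) + 1 - 2 * (i : ℤ)) (d + 1 - 2 * q)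
          (S.δ i (d - 2 * (q - (i : ℤ))) (x.1 (q - (i : ℤ))))
    else 0
  map_add' x y := by
    funext q
    by_cases h : n ≤ q ∧ q < m
    · simp only [Pi.add_apply, if_pos h]
      rw [← Finset.sum_add_distrib]
      apply Finset.sum_congr rfl
      intro i _
      have hxy : (↑(x + y) : (p : ℤ) → C (d - 2 * p)) (q - (i : ℤ))
          = x.1 (q - (i : ℤ)) + y.1 (q - (i : ℤ)) := rfl
      rw [hxy, map_add, map_add]
    · simp only [Pi.add_apply, if_neg h, add_zero]
  map_smul' c x := by
    funext q
    by_cases h : n ≤ q ∧ q < m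
    · simp only [Pi.smul_apply, RingHom.id_apply, if_pos h]
      rw [Finset.smul_sum]
      apply Finset.sum_congr rfl
      intro i _
      have hcx : (↑(c • x) : (p : ℤ) → C (d - 2 * p)) (q - (i : ℤ))
          = c • x.1 (q - (i : ℤ)) := rfl
      rw [hcx, map_smul, map_smul]
    · simp only [Pi.smul_apply, RingHom.id_apply, if_neg h, smul_zero]

@[simp] lemma truncDAux_apply (S : S1Struct K C) (m n d : ℤ) (x : ↥(truncSub K C m n d))
    (q : ℤ) : truncDAux K C S m n d x q =
    if n ≤ q ∧ q < m then
      ∑ i ∈ Finset.range ((q - n).toNat + 1),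
        tr K C (d - 2 * (q - (i : ℤ)) + 1 - 2 * (i : ℤ)) (d + 1 - 2 * q)
          (S.δ i (d - 2 * (q - (i : ℤ))) (x.1 (q - (i : ℤ))))
    else 0 := rfl

lemma truncDAux_mem (S : S1Struct K C) (m n d : ℤ) (x : ↥(truncSub K C m n d)) :
    truncDAux K C S m n d x ∈ truncSub K C m n (d + 1) := by
  intro q hq
  rw [truncDAux_apply, if_neg (by omega)]

/-- The differential of the truncated complex `C⟨m,n⟩ = uⁿC⁻/u^mC⁻`. -/
def truncD (S : S1Struct K C) (m n d : ℤ) :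
    ↥(truncSub K C m n d) →ₗ[K] ↥(truncSub K C m n (d + 1)) :=
  LinearMap.codRestrict _ (truncDAux K C S m n d) (truncDAux_mem K C S m n d)

/-- The chain map `κ⟨m,n⟩ : C⟨m,n⟩ → D⟨m,n⟩` induced by an S¹-equivariant chain map,
with components `(κ⟨m,n⟩x)_q = ∑_{i ≥ 0, q-i ≥ n} κᵢ(x_{q-i})`
(valued in the ambient product). -/
def truncKAux {S : S1Struct K C} {T : S1Struct K D} (κ : S1Map K C D S T) (m n d : ℤ) :
    ↥(truncSub K C m n d) →ₗ[K] ((q : ℤ) → D (d - 2 * q)) where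
  toFun x q :=
    if n ≤ q ∧ q < m then
      ∑ i ∈ Finset.range ((q - n).toNat + 1),
        tr K D (d - 2 * (q - (i : ℤ)) - 2 * (i : ℤ)) (d - 2 * q)
          (κ.κ i (d - 2 * (q - (i : ℤ))) (x.1 (q - (i : ℤ))))
    else 0
  map_add' x y := by
    funext q
    by_cases h : n ≤ q ∧ q < m
    · simp only [Pi.add_apply, if_pos h]
      rw [← Finset.sum_add_distrib]
      apply Finset.sum_congr rfl
      intro i _
      have hxy : (↑(x + y) : (p : ℤ) → C (d - 2 * p)) (q - (i : ℤ))
          = x.1 (q - (i : ℤ)) + y.1 (q - (i : ℤ)) := rfl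
      rw [hxy, map_add, map_add]
    · simp only [Pi.add_apply, if_neg h, add_zero]
  map_smul' c x := by
    funext q
    by_cases h : n ≤ q ∧ q < m
    · simp only [Pi.smul_apply, RingHom.id_apply, if_pos h]
      rw [Finset.smul_sum]
      apply Finset.sum_congr rfl
      intro i _
      have hcx : (↑(c • x) : (p : ℤ) → C (d - 2 * p)) (q - (i : ℤ))
          = c • x.1 (q - (i : ℤ)) := rfl
      rw [hcx, map_smul, map_smul]
    · simp only [Pi.smul_apply, RingHom.id_apply, if_neg h, smul_zero]

lemma truncKAux_mem {S : S1Struct K C} {T : S1Struct K D} (κ : S1Map K C D S T)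
    (m n d : ℤ) (x : ↥(truncSub K C m n d)) :
    truncKAux K C D κ m n d x ∈ truncSub K D m n d := by
  intro q hq
  show (if n ≤ q ∧ q < m then _ else 0) = 0
  rw [if_neg (by omega)]

/-- The chain map `κ⟨m,n⟩ : C⟨m,n⟩ → D⟨m,n⟩` induced by an S¹-equivariant chain map. -/
def truncK {S : S1Struct K C} {T : S1Struct K D} (κ : S1Map K C D S T) (m n d : ℤ) :
    ↥(truncSub K C m n d) →ₗ[K] ↥(truncSub K D m n d) :=
  LinearMap.codRestrict _ (truncKAux K C D κ m n d) (truncKAux_mem K C D κ m n d)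

end Lib

/-!
A chain map is a quasi-isomorphism exactly when its mapping cone is acyclic, so it suffices to
propagate acyclicity from the cone of `κ₀` to the cone of `κ⟨m,n⟩`. In powers of `u`, the operators
`δ^{S¹}` and `κ⟨m,n⟩` are lower triangular matrices with diagonal entries `δ₀` and `κ₀`. Hence a
cycle of the cone of `κ⟨m,n⟩` lying in filtration `u^q` has as its `u^q`-coefficient a cycle of the
cone of `κ₀`. Lifting a primitive of this coefficient and subtracting its boundary moves the cycle
into filtration `u^{q+1}`, and after `m - n` such corrections nothing is left.
-/

section MappingCone

variable {R A A' A'' B B' B'' : Type*} [Ring R]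
  [AddCommGroup A] [Module R A] [AddCommGroup A'] [Module R A'] [AddCommGroup A''] [Module R A'']
  [AddCommGroup B] [Module R B] [AddCommGroup B'] [Module R B'] [AddCommGroup B''] [Module R B'']

/-- The differential `(x, y) ↦ (-a x, f x + b y)` of the mapping cone of a chain map, in a single
degree: `a` and `b` are the differentials of source and target, `f` is the chain map. Keeping the
modules free of degrees avoids transports. -/
def coneMap (a : A →ₗ[R] A') (b : B →ₗ[R] B') (f : A →ₗ[R] B') : A × B →ₗ[R] A' × B' :=
  (-(a ∘ₗ LinearMap.fst R A B)).prod (f.coprod b)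

@[simp]
lemma coneMap_apply (a : A →ₗ[R] A') (b : B →ₗ[R] B') (f : A →ₗ[R] B') (z : A × B) :
    coneMap a b f z = (-a z.1, f z.1 + b z.2) := rfl

lemma coneMap_comp_coneMap {a : A →ₗ[R] A'} {a' : A' →ₗ[R] A''} {b : B →ₗ[R] B'}
    {b' : B' →ₗ[R] B''} {f : A →ₗ[R] B'} {f' : A' →ₗ[R] B''} (ha : a' ∘ₗ a = 0)
    (hb : b' ∘ₗ b = 0) (hf : f' ∘ₗ a = b' ∘ₗ f) :
    coneMap a' b' f' ∘ₗ coneMap a b f = 0 := by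
  refine LinearMap.ext fun z => Prod.ext ?_ ?_
  · simpa using LinearMap.congr_fun ha z.1
  · have hfz : f' (a z.1) = b' (f z.1) := LinearMap.congr_fun hf z.1
    have hbz : b' (b z.2) = 0 := LinearMap.congr_fun hb z.2
    simp [hfz, hbz]

lemma ker_le_range_of_filtration {a : A →ₗ[R] A'} {b : A' →ₗ[R] A''} (hba : b ∘ₗ a = 0)
    (Fil : ℤ → Submodule R A') {m n : ℤ} (hnm : n ≤ m) (hn : Fil n = ⊤) (hm : Fil m = ⊥)
    (hstep : ∀ q, n ≤ q → q < m → ∀ x ∈ Fil q, b x = 0 → ∃ y, x - a y ∈ Fil (q + 1)) :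
    LinearMap.ker b ≤ LinearMap.range a := by
  intro x hx
  have correction : ∀ q, n ≤ q → q ≤ m → ∃ y, x - a y ∈ Fil q := by
    intro q hq
    induction q, hq using Int.leInduction with
    | base => exact fun _ => ⟨0, hn ▸ Submodule.mem_top⟩
    | succ q hnq ih =>
      intro hqm
      obtain ⟨y, hy⟩ := ih (by lia)
      have hcycle : b (x - a y) = 0 := by
        rw [map_sub, LinearMap.mem_ker.1 hx, ← LinearMap.comp_apply, hba, LinearMap.zero_apply,
          sub_zero]
      obtain ⟨y', hy'⟩ := hstep q hnq (by lia) _ hy hcycle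
      exact ⟨y + y', by rwa [map_add, ← sub_sub]⟩
  obtain ⟨y, hy⟩ := correction m hnm le_rfl
  rw [hm, Submodule.mem_bot, sub_eq_zero] at hy
  exact ⟨y, hy.symm⟩

end MappingCone

section Transport

variable {K : Type} [CommRing K] {F : ℤ → Type} [∀ n, AddCommGroup (F n)] [∀ n, Module K (F n)]
  {G : ℤ → Type} [∀ n, AddCommGroup (G n)] [∀ n, Module K (G n)]

@[simp]
lemma tr_self (a : ℤ) : tr K F a a = LinearMap.id := by
  simp [tr, pcast]

lemma tr_tr {a b : ℤ} (h : a = b) (c : ℤ) (x : F a) :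
    tr K F b c (tr K F a b x) = tr K F a c x := by
  subst h
  simp

lemma map_tr {g : ℤ → ℤ} (f : (a : ℤ) → F a →ₗ[K] G (g a)) {a b : ℤ} (h : a = b) (x : F a) :
    f b (tr K F a b x) = tr K G (g a) (g b) (f a x) := by
  subst h
  simp

lemma range_pcast_comp (d : (n : ℤ) → F n →ₗ[K] F (n + 1)) {j k : ℤ} (h : j = k)
    (h' : j + 1 = k + 1) :
    LinearMap.range (pcast K F h' ∘ₗ d j) = LinearMap.range (d k) := by
  subst h
  rfl

end Transport

section Homology

variable {K : Type} [CommRing K] {F : ℤ → Type} [∀ n, AddCommGroup (F n)] [∀ n, Module K (F n)]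
  {G : ℤ → Type} [∀ n, AddCommGroup (G n)] [∀ n, Module K (G n)]
  {dF : (n : ℤ) → F n →ₗ[K] F (n + 1)} {dG : (n : ℤ) → G n →ₗ[K] G (n + 1)}
  {f : (n : ℤ) → F n →ₗ[K] G n}

lemma homologyOf_mk_eq_mk_iff {n : ℤ} {x y : LinearMap.ker (dF (n + 1))} :
    (Submodule.Quotient.mk x : HomologyOf K F dF (n + 1)) = Submodule.Quotient.mk y ↔
      ∃ z, dF n z = x.1 - y.1 := by
  rw [Submodule.Quotient.eq, Submodule.mem_comap, range_pcast_comp dF (by ring)]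
  rfl

lemma map_mem_ker_of_chainMap (hf : ∀ n, f (n + 1) ∘ₗ dF n = dG n ∘ₗ f n) (n : ℤ) :
    ∀ x ∈ LinearMap.ker (dF n), f n x ∈ LinearMap.ker (dG n) := by
  intro x hx
  rw [LinearMap.mem_ker, ← LinearMap.comp_apply, ← hf, LinearMap.comp_apply,
    LinearMap.mem_ker.1 hx, map_zero]

/-- The map induced on homology by a chain map, in degree `n + 1`. The shift by one makes the
incoming differential `d n`, with no transport along `n - 1 + 1 = n`. -/
noncomputable def homologyMap (hf : ∀ n, f (n + 1) ∘ₗ dF n = dG n ∘ₗ f n) (n : ℤ) :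
    HomologyOf K F dF (n + 1) →ₗ[K] HomologyOf K G dG (n + 1) :=
  Submodule.mapQ _ _ ((f (n + 1)).restrict (map_mem_ker_of_chainMap hf (n + 1))) <| by
    intro x hx
    rw [Submodule.mem_comap, range_pcast_comp dF (by ring)] at hx
    rw [Submodule.mem_comap, Submodule.mem_comap, range_pcast_comp dG (by ring)]
    obtain ⟨z, hz⟩ := hx
    exact ⟨f n z, by rw [← LinearMap.comp_apply, ← hf, LinearMap.comp_apply, hz]; rfl⟩

lemma inducesIso_iff_bijective_homologyMap (hf : ∀ n, f (n + 1) ∘ₗ dF n = dG n ∘ₗ f n) :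
    InducesIso K F G dF dG f ↔ ∀ n, Function.Bijective (homologyMap hf n) := by
  constructor
  · intro h n
    obtain ⟨φ, hφ, hmk⟩ := h (n + 1)
    have : φ = homologyMap hf n := by
      refine LinearMap.ext fun w => ?_
      obtain ⟨⟨x, hx⟩, rfl⟩ := Submodule.Quotient.mk_surjective _ w
      exact hmk x hx (map_mem_ker_of_chainMap hf (n + 1) x hx)
    rwa [← this]
  · intro h n
    obtain ⟨k, rfl⟩ : ∃ k, n = k + 1 := ⟨n - 1, by ring⟩
    exact ⟨homologyMap hf k, h k, fun _ _ _ => rfl⟩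

lemma homologyMap_injective_iff (hf : ∀ n, f (n + 1) ∘ₗ dF n = dG n ∘ₗ f n) {n : ℤ} :
    Function.Injective (homologyMap hf n) ↔
      ∀ x y, dF (n + 1) x = 0 → f (n + 1) x = dG n y → ∃ x', dF n x' = x := by
  have mk_eq_zero (x : LinearMap.ker (dF (n + 1))) :
      (Submodule.Quotient.mk x : HomologyOf K F dF (n + 1)) = 0 ↔ ∃ z, dF n z = x.1 := by
    rw [← Submodule.Quotient.mk_zero, homologyOf_mk_eq_mk_iff]
    simp
  have homologyMap_mk_eq_zero (x : LinearMap.ker (dF (n + 1))) :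
      homologyMap hf n (Submodule.Quotient.mk x) = 0 ↔ ∃ y, dG n y = f (n + 1) x.1 := by
    rw [homologyMap, Submodule.mapQ_apply, ← Submodule.Quotient.mk_zero, homologyOf_mk_eq_mk_iff]
    simp
  rw [injective_iff_map_eq_zero, (Submodule.Quotient.mk_surjective _).forall]
  simp only [mk_eq_zero, homologyMap_mk_eq_zero, Subtype.forall, LinearMap.mem_ker]
  exact ⟨fun h x y hx hy => h x hx ⟨y, hy.symm⟩, fun h x hx ⟨y, hy⟩ => h x y hx hy.symm⟩

lemma homologyMap_surjective_iff (hf : ∀ n, f (n + 1) ∘ₗ dF n = dG n ∘ₗ f n) {n : ℤ} :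
    Function.Surjective (homologyMap hf n) ↔
      ∀ y, dG (n + 1) y = 0 → ∃ x y', dF (n + 1) x = 0 ∧ y = f (n + 1) x + dG n y' := by
  have mk_eq_homologyMap_mk (y : LinearMap.ker (dG (n + 1))) (x : LinearMap.ker (dF (n + 1))) :
      homologyMap hf n (Submodule.Quotient.mk x) = Submodule.Quotient.mk y ↔
        ∃ y', y.1 = f (n + 1) x.1 + dG n y' := by
    rw [eq_comm, homologyMap, Submodule.mapQ_apply, homologyOf_mk_eq_mk_iff]
    simp only [LinearMap.restrict_apply, eq_sub_iff_add_eq', eq_comm]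
  rw [Function.Surjective, (Submodule.Quotient.mk_surjective _).forall]
  simp only [(Submodule.Quotient.mk_surjective _).exists, mk_eq_homologyMap_mk, Subtype.forall,
    Subtype.exists, LinearMap.mem_ker, exists_prop, exists_and_left]

/-- Acyclicity of the mapping cone of `f : (F, dF) → (G, dG)`, whose degree `n` part is
`F (n + 1) × G n`. Only the inclusion of cycles in boundaries is recorded, so that `dF` and `dG`
need not square to zero. -/
def ConeAcyclic (dF : (n : ℤ) → F n →ₗ[K] F (n + 1)) (dG : (n : ℤ) → G n →ₗ[K] G (n + 1))
    (f : (n : ℤ) → F n →ₗ[K] G n) : Prop :=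
  ∀ n, LinearMap.ker (coneMap (dF (n + 1 + 1)) (dG (n + 1)) (f (n + 1 + 1))) ≤
    LinearMap.range (coneMap (dF (n + 1)) (dG n) (f (n + 1)))

lemma coneAcyclic_iff_forall_exists :
    ConeAcyclic dF dG f ↔
      ∀ n x y, dF (n + 1 + 1) x = 0 → f (n + 1 + 1) x + dG (n + 1) y = 0 →
        ∃ x' y', -dF (n + 1) x' = x ∧ f (n + 1) x' + dG n y' = y := by
  simp only [ConeAcyclic, SetLike.le_def, LinearMap.mem_ker, LinearMap.mem_range, coneMap_apply,
    Prod.forall, Prod.exists, Prod.mk.injEq, Prod.mk_eq_zero, neg_eq_zero, and_imp]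

lemma inducesIso_iff_coneAcyclic (hf : ∀ n, f (n + 1) ∘ₗ dF n = dG n ∘ₗ f n) :
    InducesIso K F G dF dG f ↔ ConeAcyclic dF dG f := by
  simp only [inducesIso_iff_bijective_homologyMap hf, coneAcyclic_iff_forall_exists,
    Function.Bijective, homologyMap_injective_iff, homologyMap_surjective_iff]
  constructor
  · intro h n x y hx hxy
    obtain ⟨x₁, rfl⟩ := (h (n + 1)).1 x (-y) hx (by rw [map_neg, eq_neg_of_add_eq_zero_left hxy])
    have hfx₁ : f (n + 1 + 1) (dF (n + 1) x₁) = dG (n + 1) (f (n + 1) x₁) :=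
      LinearMap.congr_fun (hf (n + 1)) x₁
    obtain ⟨z, y', hz, hy⟩ := (h n).2 (f (n + 1) x₁ + y) (by rw [map_add, ← hfx₁, hxy])
    refine ⟨z - x₁, y', by rw [map_sub, hz, zero_sub, neg_neg], ?_⟩
    rw [map_sub, sub_add_eq_add_sub, ← hy, add_sub_cancel_left]
  · refine fun h n => ⟨fun x y hx hxy => ?_, fun y hy => ?_⟩
    · obtain ⟨k, rfl⟩ : ∃ k, n = k + 1 := ⟨n - 1, by ring⟩
      obtain ⟨x', -, hx', -⟩ := h k x (-y) hx (by rw [hxy, map_neg, add_neg_cancel])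
      exact ⟨-x', by rw [map_neg, hx']⟩
    · obtain ⟨x', y', hx', hy'⟩ := h n 0 y (map_zero _) (by rw [map_zero, hy, zero_add])
      exact ⟨x', y', neg_eq_zero.1 hx', hy'.symm⟩

lemma ConeAcyclic.shift (h : ConeAcyclic dF dG f) (s : ℤ) :
    ConeAcyclic (F := fun d => F (d - s)) (G := fun d => G (d - s))
      (fun d => tr K F (d - s + 1) (d + 1 - s) ∘ₗ dF (d - s))
      (fun d => tr K G (d - s + 1) (d + 1 - s) ∘ₗ dG (d - s))
      (fun d => f (d - s)) := by
  have transported : ∀ a b c e, b = a + 1 → c = b + 1 → e = c + 1 →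
      LinearMap.ker (coneMap (tr K F (c + 1) e ∘ₗ dF c) (tr K G (b + 1) c ∘ₗ dG b) (f c)) ≤
        LinearMap.range (coneMap (tr K F (b + 1) c ∘ₗ dF b) (tr K G (a + 1) b ∘ₗ dG a) (f b)) := by
    rintro a _ _ _ rfl rfl rfl
    simpa using h a
  exact fun n => transported _ _ _ _ (by ring) (by ring) (by ring)

end Homology

section Reindexing

variable {M : Type*} [AddCommMonoid M]

lemma sum_range_toNat_eq_sum_Icc {n q : ℤ} (h : n ≤ q) (g : ℤ → M) :
    ∑ i ∈ range ((q - n).toNat + 1), g (q - i) = ∑ p ∈ Icc n q, g p :=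
  sum_nbij' (fun i => q - i) (fun p => (q - p).toNat)
    (by simp only [mem_range, mem_Icc]; lia) (by simp only [mem_range, mem_Icc]; lia)
    (by simp) (by simp only [mem_Icc]; lia) (by simp)

lemma sum_antidiagonal_toNat_eq_sum_Icc {p q : ℤ} (h : p ≤ q) (f : ℕ → ℕ → M) :
    ∑ s ∈ antidiagonal (q - p).toNat, f s.1 s.2 =
      ∑ r ∈ Icc p q, f (q - r).toNat (r - p).toNat := by
  rw [Nat.sum_antidiagonal_eq_sum_range_succ f, ← sum_range_toNat_eq_sum_Icc h]
  refine sum_congr rfl fun i _ => ?_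
  congr 1 <;> lia

lemma sum_Icc_sum_Icc_comm (n q : ℤ) (f : ℤ → ℤ → M) :
    ∑ r ∈ Icc n q, ∑ p ∈ Icc n r, f p r = ∑ p ∈ Icc n q, ∑ r ∈ Icc p q, f p r :=
  sum_comm' fun r p => by simp only [mem_Icc]; lia

end Reindexing

section Triangular

variable {K : Type} [CommRing K] {C : ℤ → Type} [∀ n, AddCommGroup (C n)] [∀ n, Module K (C n)]
  {D : ℤ → Type} [∀ n, AddCommGroup (D n)] [∀ n, Module K (D n)]
  {E : ℤ → Type} [∀ n, AddCommGroup (E n)] [∀ n, Module K (E n)] {m n d e c : ℤ}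

lemma truncSub_ext {x y : truncSub K C m n d} (h : ∀ q < m, x.1 q = y.1 q) : x = y := by
  refine Subtype.ext (funext fun q => ?_)
  by_cases hq : q < m
  · exact h q hq
  · rw [x.2 q (by lia), y.2 q (by lia)]

variable (K C m n d) in
/-- The filtration of the truncated complex by powers of `u`: step `q` consists of the families
divisible by `u^q`. -/
def uFiltration (q : ℤ) : Submodule K (truncSub K C m n d) :=
  (Submodule.pi (Set.Iio q) fun _ => ⊥).comap (truncSub K C m n d).subtype

lemma mem_uFiltration {q : ℤ} {x : truncSub K C m n d} :
    x ∈ uFiltration K C m n d q ↔ ∀ p < q, x.1 p = 0 := by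
  simp [uFiltration, Submodule.mem_pi]

lemma uFiltration_eq_top : uFiltration K C m n d n = ⊤ :=
  eq_top_iff.2 fun x _ => mem_uFiltration.2 fun p hp => x.2 p (Or.inl hp)

lemma uFiltration_eq_bot : uFiltration K C m n d m = ⊥ :=
  eq_bot_iff.2 fun _ hx => (Submodule.mem_bot K).2 (truncSub_ext (mem_uFiltration.1 hx))

lemma exists_mem_uFiltration_apply_eq {q : ℤ} (hn : n ≤ q) (hm : q < m) (a : C (d - 2 * q)) :
    ∃ x ∈ uFiltration K C m n d q, x.1 q = a :=
  ⟨⟨Pi.single q a, fun _ _ => Pi.single_eq_of_ne (by lia) _⟩,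
    mem_uFiltration.2 fun _ _ => Pi.single_eq_of_ne (by lia) _, Pi.single_eq_same _ _⟩

variable (m n) in
/-- The map of truncated graded modules given by a lower triangular matrix of operations, `M p q`
being the contribution of the coefficient of `u^p` to the coefficient of `u^q`. Entries with
`q < p` are ignored. -/
noncomputable def triangularMap (M : (p q : ℤ) → C (d - 2 * p) →ₗ[K] D (e - 2 * q)) :
    truncSub K C m n d →ₗ[K] truncSub K D m n e :=
  LinearMap.codRestrict _
    (LinearMap.pi fun q => if q < m then
      ∑ p ∈ Icc n q, M p q ∘ₗ LinearMap.proj p ∘ₗ (truncSub K C m n d).subtype else 0) <| by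
    rintro x q (hq | hq)
    · simp [Icc_eq_empty_of_lt hq]
    · simp [hq.not_gt]

lemma triangularMap_apply (M : (p q : ℤ) → C (d - 2 * p) →ₗ[K] D (e - 2 * q))
    (x : truncSub K C m n d) {q : ℤ} (hq : q < m) :
    (triangularMap m n M x).1 q = ∑ p ∈ Icc n q, M p q (x.1 p) := by
  change (if q < m then _ else 0 : truncSub K C m n d →ₗ[K] D (e - 2 * q)) x = _
  simp [hq]

lemma triangularMap_congr {M N : (p q : ℤ) → C (d - 2 * p) →ₗ[K] D (e - 2 * q)}
    (h : ∀ p q, p ≤ q → M p q = N p q) : triangularMap m n M = triangularMap m n N := by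
  refine LinearMap.ext fun x => truncSub_ext fun q hq => ?_
  rw [triangularMap_apply M x hq, triangularMap_apply N x hq]
  exact sum_congr rfl fun p hp => by rw [h p q (mem_Icc.1 hp).2]

lemma triangularMap_zero :
    triangularMap m n (0 : (p q : ℤ) → C (d - 2 * p) →ₗ[K] D (e - 2 * q)) = 0 := by
  refine LinearMap.ext fun x => truncSub_ext fun q hq => ?_
  simp [triangularMap_apply _ x hq]

lemma triangularMap_comp (N : (p q : ℤ) → D (e - 2 * p) →ₗ[K] E (c - 2 * q))
    (M : (p q : ℤ) → C (d - 2 * p) →ₗ[K] D (e - 2 * q)) :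
    triangularMap m n N ∘ₗ triangularMap m n M =
      triangularMap m n fun p q => ∑ r ∈ Icc p q, N r q ∘ₗ M p r := by
  refine LinearMap.ext fun x => truncSub_ext fun q hq => ?_
  calc (triangularMap m n N (triangularMap m n M x)).1 q
      = ∑ r ∈ Icc n q, N r q ((triangularMap m n M x).1 r) := triangularMap_apply N _ hq
    _ = ∑ r ∈ Icc n q, ∑ p ∈ Icc n r, N r q (M p r (x.1 p)) := by
        refine sum_congr rfl fun r hr => ?_
        rw [triangularMap_apply M x ((mem_Icc.1 hr).2.trans_lt hq), map_sum]
    _ = ∑ p ∈ Icc n q, ∑ r ∈ Icc p q, N r q (M p r (x.1 p)) := sum_Icc_sum_Icc_comm n q _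
    _ = _ := by simp [triangularMap_apply _ x hq]

lemma triangularMap_apply_of_mem_uFiltration
    (M : (p q : ℤ) → C (d - 2 * p) →ₗ[K] D (e - 2 * q)) {q : ℤ} {x : truncSub K C m n d}
    (hx : x ∈ uFiltration K C m n d q) {p : ℤ} (hp : p ≤ q) :
    (triangularMap m n M x).1 p = M p p (x.1 p) := by
  by_cases hpm : n ≤ p ∧ p < m
  · rw [triangularMap_apply M x hpm.2]
    refine sum_eq_single_of_mem p (right_mem_Icc.2 hpm.1) fun r hr hrp => ?_
    have hrq : r < q := (lt_of_le_of_ne (mem_Icc.1 hr).2 hrp).trans_le hp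
    rw [mem_uFiltration.1 hx r hrq, map_zero]
  · rw [(triangularMap m n M x).2 p (by lia), x.2 p (by lia), map_zero]

end Triangular

section TriangularCone

variable {K : Type} [CommRing K] {C : ℤ → Type} [∀ n, AddCommGroup (C n)] [∀ n, Module K (C n)]
  {D : ℤ → Type} [∀ n, AddCommGroup (D n)] [∀ n, Module K (D n)] {m n : ℤ}
  {M : (d p q : ℤ) → C (d - 2 * p) →ₗ[K] C (d + 1 - 2 * q)}
  {N : (d p q : ℤ) → D (d - 2 * p) →ₗ[K] D (d + 1 - 2 * q)}
  {k : (d p q : ℤ) → C (d - 2 * p) →ₗ[K] D (d - 2 * q)}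

lemma exists_sub_coneMap_triangularMap_mem_uFiltration {q : ℤ} (hn : n ≤ q) (hm : q < m)
    (hdiag : ConeAcyclic (F := fun d => C (d - 2 * q)) (G := fun d => D (d - 2 * q))
      (fun d => M d q q) (fun d => N d q q) (fun d => k d q q)) {d : ℤ}
    {z : truncSub K C m n (d + 1 + 1) × truncSub K D m n (d + 1)}
    (hz : z ∈ (uFiltration K C m n _ q).prod (uFiltration K D m n _ q))
    (hcycle : coneMap (triangularMap m n (M _)) (triangularMap m n (N _))
      (triangularMap m n (k _)) z = 0) :
    ∃ w, z - coneMap (triangularMap m n (M _)) (triangularMap m n (N _))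
        (triangularMap m n (k _)) w ∈
      (uFiltration K C m n _ (q + 1)).prod (uFiltration K D m n _ (q + 1)) := by
  obtain ⟨x, y⟩ := z
  obtain ⟨hx, hy⟩ := hz
  simp only [coneMap_apply, Prod.mk_eq_zero, neg_eq_zero] at hcycle
  have hMx : M _ q q (x.1 q) = 0 := by
    rw [← triangularMap_apply_of_mem_uFiltration _ hx le_rfl, hcycle.1]
    rfl
  have hkxNy : k _ q q (x.1 q) + N _ q q (y.1 q) = 0 := by
    rw [← triangularMap_apply_of_mem_uFiltration (k _) hx le_rfl,
      ← triangularMap_apply_of_mem_uFiltration (N _) hy le_rfl]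
    exact congr_fun (congr_arg Subtype.val hcycle.2) q
  obtain ⟨a, b, ha, hb⟩ := coneAcyclic_iff_forall_exists.1 hdiag d _ _ hMx hkxNy
  obtain ⟨X, hX, rfl⟩ := exists_mem_uFiltration_apply_eq (K := K) hn hm a
  obtain ⟨Y, hY, rfl⟩ := exists_mem_uFiltration_apply_eq (K := K) hn hm b
  refine ⟨(X, Y), mem_uFiltration.2 fun p hp => ?_, mem_uFiltration.2 fun p hp => ?_⟩
  all_goals rw [Int.lt_add_one_iff] at hp
  · change x.1 p - -(triangularMap m n (M _) X).1 p = 0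
    rw [triangularMap_apply_of_mem_uFiltration _ hX hp]
    obtain hp | rfl := hp.lt_or_eq
    · rw [mem_uFiltration.1 hx p hp, mem_uFiltration.1 hX p hp, map_zero, neg_zero, sub_zero]
    · rw [ha, sub_self]
  · change y.1 p - ((triangularMap m n (k _) X).1 p + (triangularMap m n (N _) Y).1 p) = 0
    rw [triangularMap_apply_of_mem_uFiltration _ hX hp,
      triangularMap_apply_of_mem_uFiltration _ hY hp]
    obtain hp | rfl := hp.lt_or_eq
    · rw [mem_uFiltration.1 hy p hp, mem_uFiltration.1 hX p hp, mem_uFiltration.1 hY p hp,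
        map_zero, map_zero, add_zero, sub_zero]
    · rw [hb, sub_self]

lemma coneAcyclic_triangularMap (hnm : n ≤ m)
    (hM : ∀ d, triangularMap m n (M (d + 1)) ∘ₗ triangularMap m n (M d) = 0)
    (hN : ∀ d, triangularMap m n (N (d + 1)) ∘ₗ triangularMap m n (N d) = 0)
    (hk : ∀ d, triangularMap m n (k (d + 1)) ∘ₗ triangularMap m n (M d) =
      triangularMap m n (N d) ∘ₗ triangularMap m n (k d))
    (hdiag : ∀ q, ConeAcyclic (F := fun d => C (d - 2 * q)) (G := fun d => D (d - 2 * q))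
      (fun d => M d q q) (fun d => N d q q) (fun d => k d q q)) :
    ConeAcyclic (F := fun d => truncSub K C m n d) (G := fun d => truncSub K D m n d)
      (fun d => triangularMap m n (M d)) (fun d => triangularMap m n (N d))
      (fun d => triangularMap m n (k d)) := fun d =>
  ker_le_range_of_filtration (coneMap_comp_coneMap (hM _) (hN _) (hk _))
    (fun q => (uFiltration K C m n _ q).prod (uFiltration K D m n _ q)) hnm
    (by rw [uFiltration_eq_top, uFiltration_eq_top, Submodule.prod_top])
    (by rw [uFiltration_eq_bot, uFiltration_eq_bot, Submodule.prod_bot])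
    fun q hn hm _ hz hcycle =>
      exists_sub_coneMap_triangularMap_mem_uFiltration hn hm (hdiag q) hz hcycle

end TriangularCone

section S1Complexes

variable {K : Type} [CommRing K] {C : ℤ → Type} [∀ n, AddCommGroup (C n)] [∀ n, Module K (C n)]
  {D : ℤ → Type} [∀ n, AddCommGroup (D n)] [∀ n, Module K (D n)]
  {S : S1Struct K C} {T : S1Struct K D}

/-- The matrix entry of `δ^{S¹}` from the coefficient of `u^p` to that of `u^q`, namely `δ_{q-p}`
for `p ≤ q`. -/
def S1Struct.entry (S : S1Struct K C) (d p q : ℤ) : C (d - 2 * p) →ₗ[K] C (d + 1 - 2 * q) :=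
  tr K C _ _ ∘ₗ S.δ (q - p).toNat (d - 2 * p)

/-- The matrix entry of `κ^{S¹}` from the coefficient of `u^p` to that of `u^q`, namely `κ_{q-p}`
for `p ≤ q`. -/
def S1Map.entry (κ : S1Map K C D S T) (d p q : ℤ) : C (d - 2 * p) →ₗ[K] D (d - 2 * q) :=
  tr K D _ _ ∘ₗ κ.κ (q - p).toNat (d - 2 * p)

lemma S1Struct.sum_entry_comp_entry (S : S1Struct K C) (d : ℤ) {p q : ℤ} (hpq : p ≤ q) :
    ∑ r ∈ Icc p q, S.entry (d + 1) r q ∘ₗ S.entry d p r = 0 := by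
  refine LinearMap.ext fun x => ?_
  have hrel := congr_arg (tr K C _ (d + 1 + 1 - 2 * q)) (S.rel (q - p).toNat (d - 2 * p) x)
  rw [map_sum, map_zero, sum_antidiagonal_toNat_eq_sum_Icc hpq fun i j => tr K C _ _
    (tr K C _ _ (S.δ i (d - 2 * p + 1 - 2 * (j : ℤ)) (S.δ j (d - 2 * p) x)))] at hrel
  rw [LinearMap.sum_apply, LinearMap.zero_apply, ← hrel]
  refine sum_congr rfl fun r hr => ?_
  rw [mem_Icc] at hr
  simp only [entry, LinearMap.comp_apply]
  rw [map_tr (S.δ _) (by lia), tr_tr (by lia), tr_tr (by lia)]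

lemma S1Map.sum_entry_comp_entry (κ : S1Map K C D S T) (d : ℤ) {p q : ℤ} (hpq : p ≤ q) :
    ∑ r ∈ Icc p q, κ.entry (d + 1) r q ∘ₗ S.entry d p r =
      ∑ r ∈ Icc p q, T.entry d r q ∘ₗ κ.entry d p r := by
  refine LinearMap.ext fun x => ?_
  have hrel := congr_arg (tr K D _ (d + 1 - 2 * q)) (κ.rel (q - p).toNat (d - 2 * p) x)
  rw [sum_sub_distrib, map_sub, map_zero, sub_eq_zero, map_sum, map_sum,
    sum_antidiagonal_toNat_eq_sum_Icc hpq fun i j => tr K D _ _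
      (tr K D _ _ (κ.κ i (d - 2 * p + 1 - 2 * (j : ℤ)) (S.δ j (d - 2 * p) x))),
    ← Nat.sum_antidiagonal_swap] at hrel
  simp only [Prod.fst_swap, Prod.snd_swap] at hrel
  rw [sum_antidiagonal_toNat_eq_sum_Icc hpq fun j i => tr K D _ _
      (tr K D _ _ (T.δ j (d - 2 * p - 2 * (i : ℤ)) (κ.κ i (d - 2 * p) x)))] at hrel
  rw [LinearMap.sum_apply, LinearMap.sum_apply]
  convert hrel using 1 <;> refine sum_congr rfl fun r hr => ?_ <;> rw [mem_Icc] at hr <;>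
    simp only [entry, S1Struct.entry, LinearMap.comp_apply]
  · rw [map_tr (κ.κ _) (by lia), tr_tr (by lia), tr_tr (by lia)]
  · rw [map_tr (T.δ _) (by lia), tr_tr (by lia), tr_tr (by lia)]

lemma S1Struct.entry_self (S : S1Struct K C) (d q : ℤ) :
    S.entry d q q = tr K C (d - 2 * q + 1) (d + 1 - 2 * q) ∘ₗ d0 K C S (d - 2 * q) := by
  refine LinearMap.ext fun x => ?_
  simp only [entry, d0, LinearMap.comp_apply]
  rw [tr_tr (by simp), sub_self, Int.toNat_zero]

lemma S1Map.entry_self (κ : S1Map K C D S T) (d q : ℤ) :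
    κ.entry d q q = k0 K C D κ (d - 2 * q) := by
  rw [entry, k0, sub_self, Int.toNat_zero]

lemma k0_comp_d0 (κ : S1Map K C D S T) (n : ℤ) :
    k0 K C D κ (n + 1) ∘ₗ d0 K C S n = d0 K D T n ∘ₗ k0 K C D κ n := by
  refine LinearMap.ext fun x => ?_
  have hrel := congr_arg (tr K D _ (n + 1)) (κ.rel 0 n x)
  rw [Nat.antidiagonal_zero, sum_singleton, map_sub, map_zero, sub_eq_zero, tr_tr (by simp),
    tr_tr (by simp)] at hrel
  simp only [k0, d0, LinearMap.comp_apply]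
  rwa [map_tr (κ.κ 0) (by simp), map_tr (T.δ 0) (by simp), tr_tr (by simp), tr_tr (by simp)]

lemma truncD_eq_triangularMap (S : S1Struct K C) (m n d : ℤ) :
    truncD K C S m n d = triangularMap m n (S.entry d) := by
  refine LinearMap.ext fun x => truncSub_ext fun q hq => ?_
  by_cases hn : n ≤ q
  · rw [triangularMap_apply _ x hq, ← sum_range_toNat_eq_sum_Icc hn]
    refine (if_pos ⟨hn, hq⟩).trans (sum_congr rfl fun i _ => ?_)
    rw [S1Struct.entry, sub_sub_cancel, Int.toNat_natCast]
    rfl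
  · rw [(truncD K C S m n d x).2 q (by lia), (triangularMap m n _ x).2 q (by lia)]

lemma truncK_eq_triangularMap (κ : S1Map K C D S T) (m n d : ℤ) :
    truncK K C D κ m n d = triangularMap m n (κ.entry d) := by
  refine LinearMap.ext fun x => truncSub_ext fun q hq => ?_
  by_cases hn : n ≤ q
  · rw [triangularMap_apply _ x hq, ← sum_range_toNat_eq_sum_Icc hn]
    refine (if_pos ⟨hn, hq⟩).trans (sum_congr rfl fun i _ => ?_)
    rw [S1Map.entry, sub_sub_cancel, Int.toNat_natCast]
    rfl
  · rw [(truncK K C D κ m n d x).2 q (by lia), (triangularMap m n _ x).2 q (by lia)]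

lemma truncD_comp_truncD (S : S1Struct K C) (m n d : ℤ) :
    truncD K C S m n (d + 1) ∘ₗ truncD K C S m n d = 0 := by
  rw [truncD_eq_triangularMap, truncD_eq_triangularMap, triangularMap_comp]
  exact (triangularMap_congr fun _ _ => S.sum_entry_comp_entry d).trans triangularMap_zero

lemma truncK_comp_truncD (κ : S1Map K C D S T) (m n d : ℤ) :
    truncK K C D κ m n (d + 1) ∘ₗ truncD K C S m n d =
      truncD K D T m n d ∘ₗ truncK K C D κ m n d := by
  simp only [truncD_eq_triangularMap, truncK_eq_triangularMap, triangularMap_comp]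
  exact triangularMap_congr fun _ _ => κ.sum_entry_comp_entry d

lemma coneAcyclic_truncK {κ : S1Map K C D S T}
    (h : ConeAcyclic (d0 K C S) (d0 K D T) (k0 K C D κ)) {m n : ℤ} (hnm : n ≤ m) :
    ConeAcyclic (F := fun d => truncSub K C m n d) (G := fun d => truncSub K D m n d)
      (truncD K C S m n) (truncD K D T m n) (truncK K C D κ m n) := by
  have hC := truncD_comp_truncD S m n
  have hD := truncD_comp_truncD T m n
  have hκ := truncK_comp_truncD κ m n
  simp only [funext (truncD_eq_triangularMap S m n), funext (truncD_eq_triangularMap T m n),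
    funext (truncK_eq_triangularMap κ m n)] at hC hD hκ ⊢
  refine coneAcyclic_triangularMap hnm hC hD hκ fun q => ?_
  simpa only [S1Struct.entry_self, S1Map.entry_self] using h.shift (2 * q)

end S1Complexes

theorem stmt11 (K : Type) [CommRing K]
    (C : ℤ → Type) [∀ n, AddCommGroup (C n)] [∀ n, Module K (C n)]
    (D : ℤ → Type) [∀ n, AddCommGroup (D n)] [∀ n, Module K (D n)]
    (S : S1Struct K C) (T : S1Struct K D) (κ : S1Map K C D S T)
    (hqis : InducesIso K C D (d0 K C S) (d0 K D T) (k0 K C D κ))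
    (m n : ℤ) (hmn : n ≤ m) :
    InducesIso K (fun d => ↥(truncSub K C m n d)) (fun d => ↥(truncSub K D m n d))
      (truncD K C S m n) (truncD K D T m n) (truncK K C D κ m n) := by
  rw [inducesIso_iff_coneAcyclic (k0_comp_d0 κ)] at hqis
  exact (inducesIso_iff_coneAcyclic (truncK_comp_truncD κ m n)).2 (coneAcyclic_truncK hqis hmn)
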